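/- Let ⟨W, D⟩ be a propositional default theory over a finite variable set and φ a propositional formula. If W |~_D φ, then there is a formula γ ∈ 𝓛(W ∪ D) ∩ 𝓛(φ) such that W |~_D γ and {γ} |~_D φ. -/

import Mathlib

namespace NMR

/-- Propositional formulas over a variable type `V`. -/
inductive PropForm (V : Type*) : Type _ where
  | var : V → PropForm V
  | tru : PropForm V
  | fls : PropForm V
  | neg : PropForm V → PropForm V
  | conj : PropForm V → PropForm V → PropForm V
  | disj : PropForm V → PropForm V → PropForm V
  | impl : PropForm V → PropForm V → PropForm V

variable {V : Type*}

/-- Truth value of a formula under a valuation. -/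
def PropForm.eval (ν : V → Bool) : PropForm V → Bool
  | .var v => ν v
  | .tru => true
  | .fls => false
  | .neg φ => !(φ.eval ν)
  | .conj φ ψ => φ.eval ν && ψ.eval ν
  | .disj φ ψ => φ.eval ν || ψ.eval ν
  | .impl φ ψ => !(φ.eval ν) || ψ.eval ν

/-- The set of variables occurring in a formula. -/
def PropForm.vars : PropForm V → Set V
  | .var v => {v}
  | .tru => ∅
  | .fls => ∅
  | .neg φ => φ.vars
  | .conj φ ψ => φ.vars ∪ ψ.vars
  | .disj φ ψ => φ.vars ∪ ψ.vars
  | .impl φ ψ => φ.vars ∪ ψ.vars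

/-- `ν ⊨ φ`. -/
def Sat (ν : V → Bool) (φ : PropForm V) : Prop := φ.eval ν = true

/-- `ν ⊨ T` for a set of formulas. -/
def SatSet (ν : V → Bool) (T : Set (PropForm V)) : Prop := ∀ φ ∈ T, Sat ν φ

/-- `T ⊨ φ`. -/
def Entails (T : Set (PropForm V)) (φ : PropForm V) : Prop :=
  ∀ ν : V → Bool, SatSet ν T → Sat ν φ

/-- `T ⊨ Γ` for a set `Γ`. -/
def EntailsSet (T Γ : Set (PropForm V)) : Prop := ∀ φ ∈ Γ, Entails T φ

/-- A tautology is satisfied by every valuation. -/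
def Tautology (φ : PropForm V) : Prop := ∀ ν : V → Bool, Sat ν φ

/-- `L(T)`: the set of variables occurring in a set of formulas. -/
def varsOf (T : Set (PropForm V)) : Set V := ⋃ φ ∈ T, φ.vars

/-- `𝓛(S)`: the set of formulas all of whose variables lie in `S`. -/
def FormsOver (S : Set V) : Set (PropForm V) := {φ | φ.vars ⊆ S}

/-- `Cn^S(T)`: the formulas in `𝓛(S)` entailed by `T`. -/
def Cn (S : Set V) (T : Set (PropForm V)) : Set (PropForm V) :=
  {φ | φ.vars ⊆ S ∧ Entails T φ}

/-- Two sets of formulas are logically equivalent iff they have the same models. -/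
def EquivTheories (T T' : Set (PropForm V)) : Prop :=
  ∀ ν : V → Bool, SatSet ν T ↔ SatSet ν T'

/-- A Reiter default: prerequisite, a finite nonempty set of justifications,
and a consequent. -/
structure Default (V : Type*) where
  pre : PropForm V
  just : Set (PropForm V)
  just_finite : just.Finite
  just_nonempty : just.Nonempty
  cons : PropForm V

/-- All propositional consequences of `T`. -/
def CnAll (T : Set (PropForm V)) : Set (PropForm V) := {φ | Entails T φ}

/-- The closure conditions defining `Γ(S₀)` for the default theory `⟨W, D⟩`:
`W ⊆ S`, `Cn(S) = S`, and closure under the defaults applicable w.r.t. `S₀`. -/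
def DLClosed (W : Set (PropForm V)) (D : Set (Default V)) (S₀ S : Set (PropForm V)) : Prop :=
  W ⊆ S ∧ CnAll S = S ∧
    ∀ d ∈ D, d.pre ∈ S → (∀ β ∈ d.just, PropForm.neg β ∉ S₀) → d.cons ∈ S

/-- `Γ(S₀)`: the least set satisfying the closure conditions (the intersection
of all such sets, which is itself such a set). -/
def GammaOp (W : Set (PropForm V)) (D : Set (Default V)) (S₀ : Set (PropForm V)) :
    Set (PropForm V) := ⋂₀ {S | DLClosed W D S₀ S}

/-- `E` is an extension of `⟨W, D⟩` iff `Γ(E) = E`. -/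
def IsExtension (W : Set (PropForm V)) (D : Set (Default V)) (E : Set (PropForm V)) : Prop :=
  GammaOp W D E = E

/-- Cautious entailment `W |~_D φ`. -/
def Cautious (W : Set (PropForm V)) (D : Set (Default V)) (φ : PropForm V) : Prop :=
  ∀ E : Set (PropForm V), IsExtension W D E → φ ∈ E

/-- Brave entailment `W |~^b_D φ`. -/
def Brave (W : Set (PropForm V)) (D : Set (Default V)) (φ : PropForm V) : Prop :=
  ∃ E : Set (PropForm V), IsExtension W D E ∧ φ ∈ E

/-- `L(D)`: the variables occurring in prerequisites, justifications or
consequents of defaults in `D`. -/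
def varsD (D : Set (Default V)) : Set V :=
  ⋃ d ∈ D, (d.pre.vars ∪ (⋃ β ∈ d.just, PropForm.vars β) ∪ d.cons.vars)

open Classical in
/-- Substitute the constant `b` for the variable `v`. -/
noncomputable def substC (v : V) (b : Bool) : PropForm V → PropForm V
  | .var w => if w = v then (if b then .tru else .fls) else .var w
  | .tru => .tru
  | .fls => .fls
  | .neg φ => .neg (substC v b φ)
  | .conj φ ψ => .conj (substC v b φ) (substC v b ψ)
  | .disj φ ψ => .disj (substC v b φ) (substC v b ψ)
  | .impl φ ψ => .impl (substC v b φ) (substC v b ψ)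

theorem substC_vars (v : V) (b : Bool) (φ : PropForm V) :
    (substC v b φ).vars ⊆ φ.vars \ {v} := by
  induction φ with
  | var w =>
    by_cases h : w = v
    · cases b <;> simp [substC, PropForm.vars, h]
    · simp [substC, PropForm.vars, h]
  | tru => simp [substC, PropForm.vars]
  | fls => simp [substC, PropForm.vars]
  | neg φ ih => simpa [substC, PropForm.vars] using ih
  | conj φ ψ ih1 ih2 | disj φ ψ ih1 ih2 | impl φ ψ ih1 ih2 =>
    simp only [substC, PropForm.vars, Set.union_diff_distrib]
    exact Set.union_subset_union ih1 ih2

open Classical in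
theorem substC_eval (v : V) (b : Bool) (φ : PropForm V) (ν : V → Bool) :
    (substC v b φ).eval ν = φ.eval (Function.update ν v b) := by
  induction φ with
  | var w =>
    by_cases h : w = v
    · cases b <;> simp [substC, PropForm.eval, h]
    · simp [substC, PropForm.eval, h]
  | tru => simp [substC, PropForm.eval]
  | fls => simp [substC, PropForm.eval]
  | neg φ ih => simp [substC, PropForm.eval, ih]
  | conj φ ψ ih1 ih2 | disj φ ψ ih1 ih2 | impl φ ψ ih1 ih2 =>
    simp [substC, PropForm.eval, ih1, ih2]

theorem exists_forall_elim (T : Set V) (hT : T.Finite) (φ : PropForm V) :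
    ∃ γ : PropForm V, γ.vars ⊆ φ.vars \ T ∧ (∀ ν, Sat ν γ → Sat ν φ) ∧
      ∀ ν, (∀ ν' : V → Bool, (∀ x, x ∉ T → ν' x = ν x) → Sat ν' φ) → Sat ν γ := by
  classical
  induction T, hT using Set.Finite.induction_on with
  | empty =>
    exact ⟨φ, by simp, fun _ h => h, fun ν h => h ν (fun _ _ => rfl)⟩
  | @insert a T ha hT ih =>
    obtain ⟨γ, h1, h2, h3⟩ := ih
    refine ⟨.conj (substC a true γ) (substC a false γ), ?_, ?_, ?_⟩
    · intro x hx
      have hx' : x ∈ γ.vars \ {a} := by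
        rcases hx with hx | hx
        · exact substC_vars _ _ _ hx
        · exact substC_vars _ _ _ hx
      have := h1 hx'.1
      refine ⟨this.1, ?_⟩
      rintro (h | h)
      · exact hx'.2 h
      · exact this.2 h
    · intro ν hν
      apply h2
      simp only [Sat, PropForm.eval, substC_eval, Bool.and_eq_true] at hν ⊢
      have hb : γ.eval (Function.update ν a (ν a)) = true := by
        cases ν a
        · exact hν.2
        · exact hν.1
      simpa using hb
    · intro ν hν
      have key : ∀ b, Sat (Function.update ν a b) γ := by
        intro b
        apply h3
        intro ν' hν'
        apply hν
        intro x hx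
        have hxa : x ≠ a := fun e => hx (Or.inl e)
        rw [hν' x (fun e => hx (Or.inr e)), Function.update_of_ne hxa]
      simp only [Sat, PropForm.eval, substC_eval, Bool.and_eq_true] at key ⊢
      exact ⟨key _, key _⟩

theorem eval_congr (φ : PropForm V) (ν ν' : V → Bool) (h : ∀ x ∈ φ.vars, ν x = ν' x) :
    φ.eval ν = φ.eval ν' := by
  induction φ with
  | var w => exact h w rfl
  | tru => rfl
  | fls => rfl
  | neg φ ih => simp only [PropForm.eval]; rw [ih h]
  | conj φ ψ ih1 ih2 | disj φ ψ ih1 ih2 | impl φ ψ ih1 ih2 =>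
    simp only [PropForm.eval]
    rw [ih1 (fun x hx => h x (Or.inl hx)), ih2 (fun x hx => h x (Or.inr hx))]

theorem gamma_closed (W : Set (PropForm V)) (D : Set (Default V)) (S₀ : Set (PropForm V)) :
    DLClosed W D S₀ (GammaOp W D S₀) := by
  refine ⟨fun w hw S hS => hS.1 hw, ?_, ?_⟩
  · apply Set.Subset.antisymm
    · intro ψ hψ S hS
      rw [← hS.2.1]
      exact fun ν hν => hψ ν (fun χ hχ => hν χ (hχ S hS))
    · exact fun ψ hψ ν hν => hν ψ hψ
  · intro d hd hp hj S hS
    exact hS.2.2 d hd (hp S hS) hj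

theorem ext_closed {W : Set (PropForm V)} {D : Set (Default V)} {E : Set (PropForm V)}
    (h : IsExtension W D E) : DLClosed W D E E := by
  have := gamma_closed W D E
  rwa [h] at this

theorem ext_generated {W : Set (PropForm V)} {D : Set (Default V)} {E : Set (PropForm V)}
    (h : IsExtension W D E) :
    E ⊆ CnAll (E ∩ FormsOver (varsOf W ∪ varsD D)) := by
  have hE := ext_closed h
  have : DLClosed W D E (CnAll (E ∩ FormsOver (varsOf W ∪ varsD D))) := by
    refine ⟨?_, ?_, ?_⟩
    · intro w hw ν hν
      refine hν w ⟨hE.1 hw, ?_⟩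
      intro x hx
      exact Or.inl (Set.mem_biUnion hw hx)
    · apply Set.Subset.antisymm
      · exact fun ψ hψ ν hν => hψ ν (fun χ hχ => hχ ν hν)
      · exact fun ψ hψ ν hν => hν ψ hψ
    · intro d hd hp hj ν hν
      have hp' : d.pre ∈ E := by
        rw [← hE.2.1]
        exact fun ν hν => hp ν (fun χ hχ => hν χ hχ.1)
      refine hν _ ⟨hE.2.2 d hd hp' hj, ?_⟩
      intro x hx
      exact Or.inr (Set.mem_biUnion hd (Or.inr hx))
  intro ψ hψ
  rw [← h] at hψ
  exact hψ _ this

/-- corollary of interpolation for cautious default logic. -/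
theorem interpolation_cautious_dl_corollary {V : Type*} [Finite V]
    (W : Set (PropForm V)) (D : Set (Default V)) (φ : PropForm V)
    (h : Cautious W D φ) :
    ∃ γ : PropForm V,
      γ.vars ⊆ (varsOf W ∪ varsD D) ∩ φ.vars ∧
      Cautious W D γ ∧
      Cautious {γ} D φ := by
  obtain ⟨γ, h1, h2, h3⟩ :=
    exists_forall_elim (varsOf W ∪ varsD D)ᶜ (Set.toFinite _) φ
  refine ⟨γ, ?_, ?_, ?_⟩
  · intro x hx
    have := h1 hx
    exact ⟨not_not.1 this.2, this.1⟩
  · intro E hE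
    rw [← (ext_closed hE).2.1]
    intro ν hν
    apply h3
    intro ν' hν'
    refine ext_generated hE (h E hE) ν' ?_
    intro χ hχ
    have := hν χ hχ.1
    unfold Sat at *
    rw [← this]
    exact eval_congr _ _ _ (fun x hx => hν' x (fun hn => hn (hχ.2 hx)))
  · intro E hE
    have hc := ext_closed hE
    rw [← hc.2.1]
    exact fun ν hν => h2 ν (hν γ (hc.1 rfl))

end NMR
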